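/- A left P_k(E)-module M is projective if and only if M satisfies the weak algorithm relative to a suitable filtration μ and the set of vertices P = {p_1,…,p_d} of P_k(E). -/

import Mathlib

namespace LPA

variable {R : Type} [Ring R] {M : Type} [AddCommGroup M] [Module R M]

/-- A filtration on a ring `R`: a degree function `ν : R → ℕ ∪ {-∞}`. -/
structure IsRingFiltration (ν : R → WithBot ℕ) : Prop where
  map_zero : ν 0 = ⊥
  nonneg : ∀ r : R, r ≠ 0 → 0 ≤ ν r
  sub_le : ∀ r s : R, ν (r - s) ≤ max (ν r) (ν s)
  mul_le : ∀ r s : R, ν (r * s) ≤ ν r + ν s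
  map_one : ν 1 = 0

/-- A set of vertices in a filtered ring: a finite set of zero-degree, pairwise orthogonal
idempotents summing to `1`. -/
structure IsVertexSet (ν : R → WithBot ℕ) (P : Finset R) : Prop where
  idem : ∀ p ∈ P, p * p = p
  deg_eq_zero : ∀ p ∈ P, ν p = 0
  orthogonal : ∀ p ∈ P, ∀ q ∈ P, p ≠ q → p * q = 0
  sum_eq_one : ∑ p ∈ P, p = 1

/-- A filtration on a module over a filtered ring. -/
structure IsModuleFiltration (ν : R → WithBot ℕ) (μ : M → WithBot ℕ) : Prop where
  map_zero : μ 0 = ⊥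
  nonneg : ∀ m : M, m ≠ 0 → 0 ≤ μ m
  sub_le : ∀ m n : M, μ (m - n) ≤ max (μ m) (μ n)
  smul_le : ∀ (r : R) (m : M), μ (r • m) ≤ ν r + μ m

/-- The family `(m i)`, with `m i ∈ (n i)•M`, is left `P`-`μ`-dependent: some `m i = 0`, or
there is a finitely supported family `(r i)` with `r i ∈ R·(n i)` such that the degree of
`∑ r i • m i` is strictly smaller than its formal degree `max (ν (r i) + μ (m i))`. -/
def DepFamily (ν : R → WithBot ℕ) (μ : M → WithBot ℕ) {I : Type} (n : I → R) (m : I → M) :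
    Prop :=
  (∃ i, m i = 0) ∨ ∃ r : I →₀ R, (∀ i, r i * n i = r i) ∧
    μ (r.sum fun i ri => ri • m i) < r.support.sup fun i => ν (r i) + μ (m i)

/-- The element `x` is left `P`-`μ`-dependent on the family `(m i)`. -/
def DepOn (ν : R → WithBot ℕ) (μ : M → WithBot ℕ) {I : Type} (n : I → R) (m : I → M)
    (x : M) : Prop :=
  x = 0 ∨ ∃ r : I →₀ R, (∀ i, r i * n i = r i) ∧
    μ (x - r.sum fun i ri => ri • m i) < μ x ∧ ∀ i, ν (r i) + μ (m i) ≤ μ x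

/-- The element `x` is left `P`-`μ`-dependent on the set `S`. -/
def DepOnSet (ν : R → WithBot ℕ) (μ : M → WithBot ℕ) (P : Finset R) (S : Set M) (x : M) :
    Prop :=
  ∃ (I : Type) (n : I → R) (m : I → M), (∀ i, n i ∈ P) ∧ (∀ i, ∃ s ∈ S, m i = n i • s) ∧
    DepOn ν μ n m x

/-- `M` satisfies the weak algorithm relative to `μ` and `P`: in every finite left
`P`-`μ`-dependent family with weakly increasing degrees, some member is left
`P`-`μ`-dependent on the preceding ones. -/
def WeakAlgorithm (ν : R → WithBot ℕ) (P : Finset R) (μ : M → WithBot ℕ) : Prop :=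
  ∀ (ℓ : ℕ) (n : Fin ℓ → R) (m : Fin ℓ → M),
    (∀ i, n i ∈ P) → (∀ i, n i • m i = m i) →
    (∀ i j : Fin ℓ, i ≤ j → μ (m i) ≤ μ (m j)) →
    DepFamily ν μ n m →
    ∃ i : Fin ℓ, DepOn ν μ (fun j : {j : Fin ℓ // j < i} => n j.1)
      (fun j : {j : Fin ℓ // j < i} => m j.1) (m i)

/-- A weak `P`-`μ`-basis for `M`. -/
def IsWeakBasis (ν : R → WithBot ℕ) (P : Finset R) (μ : M → WithBot ℕ) (B : Set M) : Prop :=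
  (∀ b ∈ B, ∃ p ∈ P, ∃ m : M, b = p • m) ∧
  (∀ x : M, DepOnSet ν μ P B x) ∧
  (∀ b ∈ B, ¬ DepOnSet ν μ P (B \ {b}) b)

end LPA

namespace LPA

/-- A finite quiver: finite sets of vertices and arrows with source and target maps. -/
structure FinQuiver : Type 1 where
  V : Type
  A : Type
  [fintypeV : Fintype V]
  [decEqV : DecidableEq V]
  [fintypeA : Fintype A]
  [decEqA : DecidableEq A]
  src : A → V
  tgt : A → V

attribute [instance] FinQuiver.fintypeV FinQuiver.decEqV FinQuiver.fintypeA FinQuiver.decEqA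

/-- The inverse quiver: all arrows reversed. -/
def FinQuiver.rev (Q : FinQuiver) : FinQuiver where
  V := Q.V
  A := Q.A
  fintypeV := Q.fintypeV
  decEqV := Q.decEqV
  fintypeA := Q.fintypeA
  decEqA := Q.decEqA
  src := Q.tgt
  tgt := Q.src

/-- Generators of the path algebra: a trivial path `p v` for each vertex and an arrow `e` for
each arrow. -/
inductive PathGen (Q : FinQuiver) : Type
  | vertex (v : Q.V) : PathGen Q
  | edge (e : Q.A) : PathGen Q

/-- Defining relations of the path algebra: the trivial paths are pairwise orthogonal
idempotents summing to `1`, and `p (src e) * e = e = e * p (tgt e)`. -/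
inductive PathRel (k : Type) [CommRing k] (Q : FinQuiver) :
    FreeAlgebra k (PathGen Q) → FreeAlgebra k (PathGen Q) → Prop
  | vertex_mul_self (v : Q.V) :
      PathRel k Q (FreeAlgebra.ι k (PathGen.vertex v) * FreeAlgebra.ι k (PathGen.vertex v))
        (FreeAlgebra.ι k (PathGen.vertex v))
  | vertex_mul_ne (v w : Q.V) (h : v ≠ w) :
      PathRel k Q (FreeAlgebra.ι k (PathGen.vertex v) * FreeAlgebra.ι k (PathGen.vertex w)) 0
  | sum_vertex :
      PathRel k Q (∑ v : Q.V, FreeAlgebra.ι k (PathGen.vertex v)) 1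
  | src_mul (e : Q.A) :
      PathRel k Q
        (FreeAlgebra.ι k (PathGen.vertex (Q.src e)) * FreeAlgebra.ι k (PathGen.edge e))
        (FreeAlgebra.ι k (PathGen.edge e))
  | mul_tgt (e : Q.A) :
      PathRel k Q
        (FreeAlgebra.ι k (PathGen.edge e) * FreeAlgebra.ι k (PathGen.vertex (Q.tgt e)))
        (FreeAlgebra.ι k (PathGen.edge e))

/-- The path algebra `P_k(Q)` of a finite quiver `Q`, presented by generators and relations. -/
def PathAlg (k : Type) [CommRing k] (Q : FinQuiver) : Type :=
  RingQuot (PathRel k Q)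

variable (k : Type) [CommRing k] (Q : FinQuiver)

noncomputable instance : Ring (PathAlg k Q) :=
  inferInstanceAs (Ring (RingQuot (PathRel k Q)))

noncomputable instance : Algebra k (PathAlg k Q) :=
  inferInstanceAs (Algebra k (RingQuot (PathRel k Q)))

/-- The quotient map from the free algebra onto the path algebra. -/
noncomputable def PathAlg.mk : FreeAlgebra k (PathGen Q) →ₐ[k] PathAlg k Q :=
  RingQuot.mkAlgHom k (PathRel k Q)

/-- The trivial path (vertex idempotent) `p v` in the path algebra. -/
noncomputable def PathAlg.p (v : Q.V) : PathAlg k Q :=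
  PathAlg.mk k Q (FreeAlgebra.ι k (PathGen.vertex v))

/-- The arrow `e` in the path algebra. -/
noncomputable def PathAlg.arrow (e : Q.A) : PathAlg k Q :=
  PathAlg.mk k Q (FreeAlgebra.ι k (PathGen.edge e))

theorem PathAlg.mk_rel {x y : FreeAlgebra k (PathGen Q)} (h : PathRel k Q x y) :
    PathAlg.mk k Q x = PathAlg.mk k Q y :=
  RingQuot.mkAlgHom_rel k h

theorem PathAlg.p_mul_self (v : Q.V) : PathAlg.p k Q v * PathAlg.p k Q v = PathAlg.p k Q v := by
  have h := PathAlg.mk_rel k Q (PathRel.vertex_mul_self v)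
  simpa [map_mul, PathAlg.p] using h

theorem PathAlg.p_mul_ne (v w : Q.V) (hvw : v ≠ w) :
    PathAlg.p k Q v * PathAlg.p k Q w = 0 := by
  have h := PathAlg.mk_rel k Q (PathRel.vertex_mul_ne v w hvw)
  simpa [map_mul, PathAlg.p] using h

theorem PathAlg.sum_p : (∑ v : Q.V, PathAlg.p k Q v) = 1 := by
  have h := PathAlg.mk_rel k Q (PathRel.sum_vertex)
  simpa [map_sum, PathAlg.p] using h

theorem PathAlg.arrow_mul_tgt (e : Q.A) :
    PathAlg.arrow k Q e * PathAlg.p k Q (Q.tgt e) = PathAlg.arrow k Q e := by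
  have h := PathAlg.mk_rel k Q (PathRel.mul_tgt e)
  simpa [map_mul, PathAlg.p, PathAlg.arrow] using h

theorem PathAlg.src_mul_arrow (e : Q.A) :
    PathAlg.p k Q (Q.src e) * PathAlg.arrow k Q e = PathAlg.arrow k Q e := by
  have h := PathAlg.mk_rel k Q (PathRel.src_mul e)
  simpa [map_mul, PathAlg.p, PathAlg.arrow] using h

/-- The set of vertices `{p v | v ∈ Q.V}` of the path algebra, as a finite set. -/
noncomputable def vertexFinset : Finset (PathAlg k Q) :=
  letI := Classical.decEq (PathAlg k Q)
  Finset.univ.image (PathAlg.p k Q)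

end LPA

namespace LPA

variable (k : Type) [CommRing k] (Q : FinQuiver)

/-- The image in the path algebra of a word in the generators. -/
noncomputable def pathOfWord (w : FreeMonoid (PathGen Q)) : PathAlg k Q :=
  PathAlg.mk k Q (FreeMonoid.lift (FreeAlgebra.ι k) w)

/-- The number of edge-letters in a word in the generators. -/
def edgeCount (w : FreeMonoid (PathGen Q)) : ℕ :=
  (FreeMonoid.toList w).countP fun g =>
    match g with
    | PathGen.edge _ => true
    | PathGen.vertex _ => false

/-- The `k`-span of the images of all words with at most `n` edge-letters: the elements of
degree at most `n` in the path algebra. -/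
noncomputable def wordSpan (n : ℕ) : Submodule k (PathAlg k Q) :=
  Submodule.span k (pathOfWord k Q '' {w | edgeCount Q w ≤ n})

open Classical in
/-- The path-length degree function on the path algebra: `pdeg x` is the smallest `n` such
that `x` is a `k`-linear combination of paths of length at most `n` (i.e. the maximal length
of a path in the support of `x`), and `pdeg 0 = ⊥ = -∞`. -/
noncomputable def pdeg (x : PathAlg k Q) : WithBot ℕ :=
  if x = 0 then ⊥ else ↑(sInf {n : ℕ | x ∈ wordSpan k Q n})

end LPA

/-!
Suppose `M` satisfies the weak algorithm. Well-order the pairs `(p, m)` with `p` a vertex and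
`p • m = m` so that the degrees increase, and keep those whose member `m` does not depend on the
preceding ones. By the weak algorithm the members kept are independent, and by induction on the
degree they span, so `M` is a direct sum of the projective left ideals `R p`.

Conversely, a projective module embeds in a free one, from which both the filtration and the weak
algorithm are pulled back. On a free module the algorithm comes from the transductions `D e`, which
delete a leading arrow `e`. They satisfy the Leibniz rule `D e (r s) = D e r * s + ε r * D e s` with
`ε r` a scalar, and they lower degrees. The expansion `x = ∑ v, ε v x • p v + ∑ e, e * D e x` shows
that if `x` has positive degree, then some `D e` lowers its degree by exactly one. By the Leibniz
rule, applying `D e` to a relation `∑ r j • m j` amounts, up to terms of small degree, to applying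
it to the coefficients. Repeating this turns the leading coefficient into a nonzero scalar multiple
of a vertex, and then the last leading member depends on the preceding ones.
-/

namespace LPA

section Filtration

theorem lt_of_add_one_le_of_ne_bot {a b : WithBot ℕ} (hb : b ≠ ⊥) (h : a + 1 ≤ b) : a < b := by
  induction a with
  | bot => exact hb.bot_lt
  | coe n => exact (WithBot.coe_lt_coe.2 n.lt_succ_self).trans_le h

variable {R : Type} [Ring R] {M : Type} [AddCommGroup M] [Module R M]
  {ν : R → WithBot ℕ} {μ : M → WithBot ℕ}

namespace IsModuleFiltration

theorem neg_le (h : IsModuleFiltration ν μ) (m : M) : μ (-m) ≤ μ m := by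
  simpa [h.map_zero] using h.sub_le 0 m

theorem add_le (h : IsModuleFiltration ν μ) (m n : M) : μ (m + n) ≤ max (μ m) (μ n) := by
  simpa using (h.sub_le m (-n)).trans (max_le_max_left _ (h.neg_le n))

theorem sum_lt (h : IsModuleFiltration ν μ) {ι : Type*} {s : Finset ι} {f : ι → M}
    {c : WithBot ℕ} (hc : ⊥ < c) (hf : ∀ i ∈ s, μ (f i) < c) : μ (∑ i ∈ s, f i) < c :=
  Finset.sum_induction f (μ · < c) (fun a b ha hb => (h.add_le a b).trans_lt (max_lt ha hb))
    (h.map_zero ▸ hc) hf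

theorem smul_le_of_deg_nonpos (h : IsModuleFiltration ν μ) {r : R} (hr : ν r ≤ 0) (m : M) :
    μ (r • m) ≤ μ m :=
  (h.smul_le r m).trans (add_le_of_nonpos_left hr)

theorem comap {N : Type} [AddCommGroup N] [Module R N] (h : IsModuleFiltration ν μ)
    {f : N →ₗ[R] M} (hf : Function.Injective f) : IsModuleFiltration ν (μ ∘ f) where
  map_zero := by simp [h.map_zero]
  nonneg n hn := h.nonneg _ ((map_ne_zero_iff f hf).2 hn)
  sub_le a b := by simpa using h.sub_le (f a) (f b)
  smul_le r n := by simpa using h.smul_le r (f n)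

end IsModuleFiltration

/-- The filtration induced on a direct sum of copies of a filtered module: the largest degree of
a coordinate, with the empty maximum equal to `⊥`. -/
def maxDegree (μ : M → WithBot ℕ) {I : Type} (f : I →₀ M) : WithBot ℕ :=
  f.support.sup fun i => μ (f i)

theorem IsModuleFiltration.le_maxDegree (h : IsModuleFiltration ν μ) {I : Type} (f : I →₀ M)
    (i : I) : μ (f i) ≤ maxDegree μ f := by
  by_cases hi : f i = 0
  · simp [hi, h.map_zero]
  · exact Finset.le_sup (f := fun i => μ (f i)) (Finsupp.mem_support_iff.2 hi)

theorem maxDegree_le {I : Type} {f : I →₀ M} {c : WithBot ℕ} (h : ∀ i, μ (f i) ≤ c) :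
    maxDegree μ f ≤ c :=
  Finset.sup_le fun i _ => h i

theorem IsModuleFiltration.maxDegree (h : IsModuleFiltration ν μ) (I : Type) :
    IsModuleFiltration ν (maxDegree μ (I := I)) where
  map_zero := by simp [LPA.maxDegree]
  nonneg f hf := by
    obtain ⟨i, hi⟩ := Finsupp.ne_iff.1 hf
    exact (h.nonneg _ hi).trans (h.le_maxDegree f i)
  sub_le f g := maxDegree_le fun i =>
    (h.sub_le _ _).trans (max_le_max (h.le_maxDegree f i) (h.le_maxDegree g i))
  smul_le r f := maxDegree_le fun i =>
    (h.smul_le r _).trans (add_le_add_right (h.le_maxDegree f i) _)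

end Filtration

section Dependence

variable {R : Type} [Ring R] {M : Type} [AddCommGroup M] [Module R M]
  {ν : R → WithBot ℕ} {μ : M → WithBot ℕ} {P : Finset R}

theorem DepOn.of_embedding (hν : ν 0 = ⊥) {I J : Type} (g : I ↪ J) {p : J → R} {m : J → M} {x : M}
    (h : DepOn ν μ (fun i => p (g i)) (fun i => m (g i)) x) : DepOn ν μ p m x := by
  refine h.imp_right ?_
  rintro ⟨r, hrp, hlt, hle⟩
  refine ⟨r.embDomain g, fun j => ?_, by rwa [Finsupp.sum_embDomain], fun j => ?_⟩ <;>
    by_cases hj : j ∈ Set.range g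
  · obtain ⟨i, rfl⟩ := hj
    simpa using hrp i
  · simp [Finsupp.embDomain_of_notMem_range _ _ _ hj]
  · obtain ⟨i, rfl⟩ := hj
    simpa using hle i
  · simp [Finsupp.embDomain_of_notMem_range _ _ _ hj, hν]

theorem depOn_comp_iff {N : Type} [AddCommGroup N] [Module R N] {f : N →ₗ[R] M}
    (hf : Function.Injective f) {I : Type} {p : I → R} {n : I → N} {x : N} :
    DepOn ν (μ ∘ f) p n x ↔ DepOn ν μ p (f ∘ n) (f x) := by
  simp [DepOn, map_finsuppSum, map_eq_zero_iff f hf]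

theorem depFamily_comp_iff {N : Type} [AddCommGroup N] [Module R N] {f : N →ₗ[R] M}
    (hf : Function.Injective f) {I : Type} {p : I → R} {n : I → N} :
    DepFamily ν (μ ∘ f) p n ↔ DepFamily ν μ p (f ∘ n) := by
  simp [DepFamily, map_finsuppSum, map_eq_zero_iff f hf]

theorem WeakAlgorithm.comap {N : Type} [AddCommGroup N] [Module R N] (h : WeakAlgorithm ν P μ)
    {f : N →ₗ[R] M} (hf : Function.Injective f) : WeakAlgorithm ν P (μ ∘ f) := by
  intro ℓ p n hP hpn hmono hdep
  obtain ⟨i, hi⟩ := h ℓ p (f ∘ n) hP (fun i => by simp [← map_smul, hpn]) hmono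
    ((depFamily_comp_iff hf).1 hdep)
  exact ⟨i, (depOn_comp_iff hf).2 hi⟩

theorem exists_embDomain_eq {ι R : Type*} [LinearOrder ι] [Zero R] (r : ι →₀ R) :
    ∃ (ℓ : ℕ) (e : Fin ℓ ↪o ι) (s : Fin ℓ →₀ R), s.embDomain e.toEmbedding = r :=
  ⟨_, r.support.orderEmbOfFin rfl, _, Finsupp.embDomain_comapDomain (by simp)⟩

theorem WeakAlgorithm.exists_depOn (h : WeakAlgorithm ν P μ) (hν : ν 0 = ⊥) {ι : Type}
    [LinearOrder ι] {p : ι → R} {x : ι → M} (hP : ∀ i, p i ∈ P) (hpx : ∀ i, p i • x i = x i)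
    (hmono : Monotone (μ ∘ x)) (hdep : DepFamily ν μ p x) :
    ∃ i, DepOn ν μ (fun j : Set.Iio i => p j) (fun j : Set.Iio i => x j) (x i) := by
  obtain ⟨i, hi⟩ | ⟨r, hrp, hlt⟩ := hdep
  · exact ⟨i, Or.inl hi⟩
  obtain ⟨ℓ, e, s, rfl⟩ := exists_embDomain_eq r
  have hs (i) : s.embDomain e.toEmbedding (e i) = s i :=
    Finsupp.embDomain_apply_self e.toEmbedding s i
  have hdep : DepFamily ν μ (fun i => p (e i)) (fun i => x (e i)) := by
    refine Or.inr ⟨s, fun i => by simpa only [hs] using hrp (e i), ?_⟩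
    simpa [Finsupp.sum_embDomain, Finset.sup_map, Function.comp_def, hs] using hlt
  obtain ⟨i, hi⟩ := h _ _ _ (fun i => hP (e i)) (fun i => hpx (e i))
    (fun i j hij => hmono (e.monotone hij)) hdep
  let g : {j // j < i} ↪ Set.Iio (e i) :=
    ⟨fun j => ⟨e j, e.strictMono j.2⟩, fun a b hab =>
      Subtype.ext (e.injective (congrArg Subtype.val hab))⟩
  exact ⟨e i, hi.of_embedding hν g⟩

end Dependence

section Projectivity

theorem exists_linearOrder_monotone {α β : Type*} [LinearOrder β] [WellFoundedLT β] (f : α → β) :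
    ∃ (_ : LinearOrder α), WellFoundedLT α ∧ Monotone f := by
  obtain ⟨_, _⟩ := exists_wellFoundedLT α
  let g : α → β ×ₗ α := fun a => toLex (f a, a)
  have hg : Function.Injective g := fun _ _ h => congrArg (fun z => (ofLex z).2) h
  exact ⟨LinearOrder.lift' g hg, ⟨InvImage.wf g wellFounded_lt⟩,
    fun _ _ h => Prod.Lex.monotone_fst _ _ h⟩

/-- Such an `M` is the direct sum of the projective modules `R p i`. -/
theorem projective_of_idempotent_basis {R M ι : Type*} [Ring R] [AddCommGroup M] [Module R M]
    {p : ι → R} {x : ι → M} (hp : ∀ i, IsIdempotentElem (p i)) (hpx : ∀ i, p i • x i = x i)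
    (hspan : Submodule.span R (Set.range x) = ⊤)
    (hind : ∀ f : ι →₀ R, (∀ i, f i * p i = f i) → Finsupp.linearCombination R x f = 0 → f = 0) :
    Module.Projective R M := by
  let L := Finsupp.linearCombination R x
  have hL : Function.Surjective L := by
    rw [← LinearMap.range_eq_top, Finsupp.range_linearCombination, hspan]
  let π : (ι →₀ R) →ₗ[R] (ι →₀ R) :=
    Finsupp.linearCombination R fun i => Finsupp.single i (p i)
  have hπ (f : ι →₀ R) (i : ι) : π f i = f i * p i := by
    classical
    simp only [π, Finsupp.linearCombination_apply, Finsupp.sum_apply, Finsupp.smul_apply,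
      Finsupp.single_apply, smul_eq_mul, mul_ite, mul_zero]
    simp +contextual [Finsupp.sum]
  have hLπ : L ∘ₗ π = L := by
    ext i
    simp [L, π, hpx]
  have hker : LinearMap.ker L ≤ LinearMap.ker π := fun f hf =>
    hind (π f) (fun i => by rw [hπ, mul_assoc, (hp i).eq]) ((LinearMap.congr_fun hLπ f).trans hf)
  refine Module.Projective.of_split
    ((LinearMap.ker L).liftQ π hker ∘ₗ (L.quotKerEquivOfSurjective hL).symm) L ?_
  ext m
  obtain ⟨f, rfl⟩ := hL m
  simpa using LinearMap.congr_fun hLπ f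

variable {R : Type} [Ring R] {M : Type} [AddCommGroup M] [Module R M]
  {ν : R → WithBot ℕ} {μ : M → WithBot ℕ} {P : Finset R}

/-- The indices of a well-ordered family whose member is not dependent on the preceding ones. -/
def irredundantIndices (ν : R → WithBot ℕ) (μ : M → WithBot ℕ) {ι : Type} [LinearOrder ι]
    (p : ι → R) (x : ι → M) : Set ι :=
  {i | ¬ DepOn ν μ (fun j : Set.Iio i => p j) (fun j : Set.Iio i => x j) (x i)}

theorem WeakAlgorithm.not_depFamily_irredundantIndices (h : WeakAlgorithm ν P μ) (hν : ν 0 = ⊥)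
    {ι : Type} [LinearOrder ι] {p : ι → R} {x : ι → M} (hP : ∀ i, p i ∈ P)
    (hpx : ∀ i, p i • x i = x i) (hmono : Monotone (μ ∘ x)) :
    ¬ DepFamily ν μ (fun i : irredundantIndices ν μ p x => p i)
      (fun i : irredundantIndices ν μ p x => x i) := by
  intro hdep
  obtain ⟨i, hi⟩ := h.exists_depOn (x := fun i : irredundantIndices ν μ p x => x i) hν
    (fun i => hP i) (fun i => hpx i) (fun _ _ hij => hmono hij) hdep
  let g : Set.Iio i ↪ Set.Iio (i : ι) :=
    ⟨fun j => ⟨j, j.2⟩, fun a b hab => by simpa [Subtype.ext_iff] using hab⟩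
  exact i.2 (hi.of_embedding hν g)

theorem eq_zero_of_not_depFamily (hν : IsModuleFiltration ν ν) (hμ : IsModuleFiltration ν μ)
    {ι : Type} {p : ι → R} {x : ι → M} (hdep : ¬ DepFamily ν μ p x) {f : ι →₀ R}
    (hfp : ∀ i, f i * p i = f i) (hf : Finsupp.linearCombination R x f = 0) : f = 0 := by
  by_contra hne
  obtain ⟨i, hi⟩ := Finsupp.ne_iff.1 hne
  have hxi : x i ≠ 0 := fun hx => hdep (Or.inl ⟨i, hx⟩)
  refine hdep (Or.inr ⟨f, hfp, ?_⟩)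
  rw [← Finsupp.linearCombination_apply, hf, hμ.map_zero, Finset.lt_sup_iff]
  exact ⟨i, Finsupp.mem_support_iff.2 hi, (WithBot.bot_lt_coe 0).trans_le
    (add_nonneg (hν.nonneg _ hi) (hμ.nonneg _ hxi))⟩

theorem sum_smul_eq_self (hsum : ∑ p ∈ P, p = 1) (m : M) : ∑ p ∈ P, p • m = m := by
  rw [← Finset.sum_smul, hsum, one_smul]

/-- Since the degrees are well-ordered, repeatedly subtracting a combination of earlier members
rewrites every member of the family in terms of the irredundant ones. -/
theorem mem_span_irredundantIndices (hμ : IsModuleFiltration ν μ) (hP : ∀ p ∈ P, ν p ≤ 0)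
    (hidem : ∀ p ∈ P, IsIdempotentElem p) (hsum : ∑ p ∈ P, p = 1) {ι : Type} [LinearOrder ι]
    [WellFoundedLT ι] {p : ι → R} {x : ι → M} (hmono : Monotone (μ ∘ x))
    (hx : ∀ q ∈ P, ∀ m, q • m = m → m ∈ Set.range x) (i : ι) :
    x i ∈ Submodule.span R (x '' irredundantIndices ν μ p x) := by
  induction i using WellFoundedLT.induction with | ind i ih
  by_cases hi : i ∈ irredundantIndices ν μ p x
  · exact Submodule.subset_span ⟨i, hi, rfl⟩
  obtain hxi | ⟨r, -, hlt, -⟩ := not_not.1 hi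
  · exact hxi ▸ Submodule.zero_mem _
  set s := r.sum fun j rj => rj • x j
  have hs : s ∈ Submodule.span R (x '' irredundantIndices ν μ p x) :=
    Submodule.sum_mem _ fun j _ => Submodule.smul_mem _ _ (ih j j.2)
  have hxs : x i - s ∈ Submodule.span R (x '' irredundantIndices ν μ p x) := by
    rw [← sum_smul_eq_self hsum (x i - s)]
    refine Submodule.sum_mem _ fun q hq => ?_
    obtain ⟨j, hj⟩ := hx q hq (q • (x i - s)) (by rw [smul_smul, hidem q hq])
    have hji : μ (x j) < μ (x i) :=
      hj ▸ (hμ.smul_le_of_deg_nonpos (hP q hq) _).trans_lt hlt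
    exact hj ▸ ih j (hmono.reflect_lt hji)
  simpa using Submodule.add_mem _ hxs hs

theorem projective_of_weakAlgorithm (hν : IsModuleFiltration ν ν) (hμ : IsModuleFiltration ν μ)
    (hP : ∀ p ∈ P, ν p ≤ 0) (hidem : ∀ p ∈ P, IsIdempotentElem p) (hsum : ∑ p ∈ P, p = 1)
    (h : WeakAlgorithm ν P μ) : Module.Projective R M := by
  let ι := {i : R × M // i.1 ∈ P ∧ i.1 • i.2 = i.2}
  let p (i : ι) : R := i.1.1
  let x (i : ι) : M := i.1.2
  obtain ⟨_, _, hmono⟩ := exists_linearOrder_monotone (μ ∘ x)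
  have hx (q) (hq : q ∈ P) (m : M) (hm : q • m = m) : m ∈ Set.range x :=
    ⟨⟨(q, m), hq, hm⟩, rfl⟩
  have hspan : Submodule.span R (x '' irredundantIndices ν μ p x) = ⊤ := by
    refine Submodule.eq_top_iff'.2 fun m => ?_
    rw [← sum_smul_eq_self hsum m]
    refine Submodule.sum_mem _ fun q hq => ?_
    obtain ⟨i, hi⟩ := hx q hq (q • m) (by rw [smul_smul, hidem q hq])
    exact hi ▸ mem_span_irredundantIndices hμ hP hidem hsum hmono hx i
  have hindep := h.not_depFamily_irredundantIndices (p := p) hν.map_zero (fun i => i.2.1)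
    (fun i => i.2.2) hmono
  refine projective_of_idempotent_basis (fun i => hidem _ i.1.2.1) (fun i => i.1.2.2) ?_
    fun f => eq_zero_of_not_depFamily hν hμ hindep
  rwa [Set.image_eq_range] at hspan

end Projectivity

section LeadingRelation

variable {R : Type} [Ring R] {M : Type} [AddCommGroup M] [Module R M]
  {ν : R → WithBot ℕ} {μ : M → WithBot ℕ} {ι : Type} [Fintype ι] [LinearOrder ι]
  {p : ι → R} {m : ι → M} {i : ι} {r : ι → R}

/-- A dependence relation `r` among the `m j`, with `r j ∈ R p j`, led by the index `i`: its formal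
degree is attained at `i` and at no later index. -/
structure IsLeadingRelation (ν : R → WithBot ℕ) (μ : M → WithBot ℕ) (p : ι → R) (m : ι → M)
    (i : ι) (r : ι → R) : Prop where
  mul_eq : ∀ j, r j * p j = r j
  deg_le : ∀ j, ν (r j) + μ (m j) ≤ ν (r i) + μ (m i)
  deg_lt : ∀ j, i < j → ν (r j) + μ (m j) < ν (r i) + μ (m i)
  sum_lt : μ (∑ j, r j • m j) < ν (r i) + μ (m i)

theorem exists_isLeadingRelation {r : ι →₀ R} (hrp : ∀ i, r i * p i = r i)
    (hlt : μ (r.sum fun i ri => ri • m i) < r.support.sup fun i => ν (r i) + μ (m i)) :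
    ∃ i, IsLeadingRelation ν μ p m i r := by
  rw [Finsupp.sum_fintype _ _ (by simp)] at hlt
  obtain ⟨j, -, hj⟩ := Finset.lt_sup_iff.1 hlt
  have : Nonempty ι := ⟨j⟩
  obtain ⟨i, hi⟩ := Finite.exists_max fun j => toLex (ν (r j) + μ (m j), j)
  simp only [Prod.Lex.toLex_le_toLex] at hi
  have hle (j) : ν (r j) + μ (m j) ≤ ν (r i) + μ (m i) := (hi j).elim le_of_lt fun h => h.1.le
  exact ⟨i, hrp, hle, fun j hij => (hi j).resolve_right fun h => h.2.not_gt hij,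
    hj.trans_le (hle j)⟩

theorem sum_eq_sum_lt_add_sum_gt (f : ι → M) (i : ι) :
    ∑ j, f j = ∑ j : {j // j < i}, f j + (f i + ∑ j : {j // i < j}, f j) := by
  have hnot : (Finset.univ.filter fun j => ¬ j < i) = insert i (Finset.univ.filter (i < ·)) := by
    ext j
    simp [le_iff_eq_or_lt, eq_comm]
  rw [← Finset.sum_filter_add_sum_filter_not Finset.univ (· < i), hnot,
    Finset.sum_insert (by simp), ← Finset.sum_subtype_eq_sum_filter,
    ← Finset.sum_subtype_eq_sum_filter, Finset.subtype_univ, Finset.subtype_univ]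

theorem IsLeadingRelation.depOn (h : IsLeadingRelation ν μ p m i r) (hν : IsModuleFiltration ν ν)
    (hμ : IsModuleFiltration ν μ) (hm : p i • m i = m i) (hr : ν (r i) ≤ 0) {d : R} (hd : ν d ≤ 0)
    (hdr : d * r i = p i) :
    DepOn ν μ (fun j : {j // j < i} => p j) (fun j : {j // j < i} => m j) (m i) := by
  have hdeg : ν (r i) + μ (m i) ≤ μ (m i) := add_le_of_nonpos_left hr
  have hmi : d • r i • m i = m i := by rw [smul_smul, hdr, hm]
  refine Or.inr ⟨Finsupp.equivFunOnFinite.symm fun j => -(d * r j), fun j => ?_, ?_, fun j => ?_⟩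
  · simp [mul_assoc, h.mul_eq]
  · have hsub : m i - ∑ j : {j // j < i}, -(d * r j) • m j =
        d • (∑ j, r j • m j - ∑ j : {j // i < j}, r j • m j) := by
      simp only [sum_eq_sum_lt_add_sum_gt _ i, smul_sub, smul_add, hmi, neg_smul, mul_smul,
        Finset.sum_neg_distrib, Finset.smul_sum]
      abel
    rw [Finsupp.sum_fintype _ _ (by simp)]
    simp only [Finsupp.equivFunOnFinite_symm_apply_apply, hsub]
    refine (hμ.smul_le_of_deg_nonpos hd _).trans_lt ((hμ.sub_le _ _).trans_lt (max_lt ?_ ?_))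
    · exact h.sum_lt.trans_le hdeg
    · refine hμ.sum_lt ((bot_le.trans_lt h.sum_lt).trans_le hdeg) fun j _ => ?_
      exact (hμ.smul_le _ _).trans_lt ((h.deg_lt j j.2).trans_le hdeg)
  · calc ν (-(d * r j)) + μ (m j) ≤ ν (r j) + μ (m j) :=
        add_le_add_left ((hν.neg_le _).trans (hν.smul_le_of_deg_nonpos hd (r j))) _
      _ ≤ μ (m i) := (h.deg_le j).trans hdeg

end LeadingRelation

section PathAlgebra

variable {k : Type} [CommRing k] {Q : FinQuiver}

/-- Elements of a ring satisfying the defining relations of the path algebra of `Q`. -/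
structure IsPathRep {B : Type} [Ring B] (P : Q.V → B) (E : Q.A → B) : Prop where
  vertex_mul_self : ∀ v, P v * P v = P v
  vertex_mul_ne : ∀ v w, v ≠ w → P v * P w = 0
  sum_vertex : ∑ v, P v = 1
  src_mul : ∀ e, P (Q.src e) * E e = E e
  mul_tgt : ∀ e, E e * P (Q.tgt e) = E e

namespace PathAlg

variable {B : Type} [Ring B] [Algebra k B] {P : Q.V → B} {E : Q.A → B}

/-- The algebra homomorphism out of the path algebra given by its universal property. -/
noncomputable def lift (h : IsPathRep P E) : PathAlg k Q →ₐ[k] B :=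
  RingQuot.liftAlgHom k ⟨FreeAlgebra.lift k fun | .vertex v => P v | .edge e => E e,
    fun _ _ hxy => by
      cases hxy <;>
        simp [h.vertex_mul_self, h.vertex_mul_ne, h.sum_vertex, h.src_mul, h.mul_tgt, *]⟩

@[simp]
theorem lift_p (h : IsPathRep P E) (v : Q.V) : lift h (p k Q v) = P v :=
  (RingQuot.liftAlgHom_mkAlgHom_apply _ _ _ _).trans (FreeAlgebra.lift_ι_apply _ _)

@[simp]
theorem lift_arrow (h : IsPathRep P E) (e : Q.A) : lift h (arrow k Q e) = E e :=
  (RingQuot.liftAlgHom_mkAlgHom_apply _ _ _ _).trans (FreeAlgebra.lift_ι_apply _ _)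

theorem induction {C : PathAlg k Q → Prop} (algebraMap : ∀ c, C (algebraMap k _ c))
    (vertex : ∀ v, C (p k Q v)) (arrow : ∀ e, C (arrow k Q e))
    (mul : ∀ x y, C x → C y → C (x * y)) (add : ∀ x y, C x → C y → C (x + y))
    (x : PathAlg k Q) : C x := by
  obtain ⟨y, rfl⟩ := RingQuot.mkAlgHom_surjective k (PathRel k Q) x
  change C (mk k Q y)
  induction y using FreeAlgebra.induction with
  | grade0 c => simpa using algebraMap c
  | grade1 g =>
    cases g with
    | vertex v => exact vertex v
    | edge e => exact arrow e
  | mul x y hx hy => simpa using mul _ _ hx hy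
  | add x y hx hy => simpa using add _ _ hx hy

theorem p_mul_p (v w : Q.V) : p k Q v * p k Q w = if v = w then p k Q v else 0 := by
  split_ifs with h
  · rw [← h, p_mul_self]
  · exact p_mul_ne k Q v w h

theorem p_mul_arrow (v : Q.V) (e : Q.A) :
    p k Q v * arrow k Q e = if v = Q.src e then arrow k Q e else 0 := by
  rw [← src_mul_arrow, ← mul_assoc, p_mul_p]
  split_ifs with h <;> simp [h]

theorem isIdempotentElem_p (v : Q.V) : IsIdempotentElem (p k Q v) :=
  p_mul_self k Q v

end PathAlg

theorem mem_vertexFinset {x : PathAlg k Q} : x ∈ vertexFinset k Q ↔ ∃ v, PathAlg.p k Q v = x := by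
  classical
  simp [vertexFinset]

theorem sum_vertexFinset : ∑ p ∈ vertexFinset k Q, p = 1 := by
  classical
  have hzero {v w : Q.V} (hvw : v ≠ w) (h : PathAlg.p k Q v = PathAlg.p k Q w) :
      PathAlg.p k Q v = 0 := by
    rw [← PathAlg.p_mul_ne k Q v w hvw, ← h, PathAlg.p_mul_self]
  rw [← PathAlg.sum_p k Q]
  refine (Finset.sum_congr (by unfold vertexFinset; congr!) fun _ _ => rfl).trans
    (Finset.sum_image_of_pairwise_eq_zero (g := id) fun v _ w _ => hzero)

end PathAlgebra

section PathLength

variable {k : Type} [CommRing k] {Q : FinQuiver}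

theorem pathOfWord_one : pathOfWord k Q 1 = 1 := by simp [pathOfWord]

theorem pathOfWord_mul (a b : FreeMonoid (PathGen Q)) :
    pathOfWord k Q (a * b) = pathOfWord k Q a * pathOfWord k Q b := by simp [pathOfWord]

theorem pathOfWord_vertex (v : Q.V) :
    pathOfWord k Q (FreeMonoid.of (PathGen.vertex v)) = PathAlg.p k Q v := by
  simp [pathOfWord, PathAlg.p]

theorem pathOfWord_edge (e : Q.A) :
    pathOfWord k Q (FreeMonoid.of (PathGen.edge e)) = PathAlg.arrow k Q e := by
  simp [pathOfWord, PathAlg.arrow]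

theorem edgeCount_one : edgeCount Q 1 = 0 := by simp [edgeCount]

theorem edgeCount_mul (a b : FreeMonoid (PathGen Q)) :
    edgeCount Q (a * b) = edgeCount Q a + edgeCount Q b := by simp [edgeCount]

theorem edgeCount_vertex (v : Q.V) : edgeCount Q (FreeMonoid.of (PathGen.vertex v)) = 0 := by
  simp [edgeCount]

theorem edgeCount_edge (e : Q.A) : edgeCount Q (FreeMonoid.of (PathGen.edge e)) = 1 := by
  simp [edgeCount]

theorem pathOfWord_mem_wordSpan (w : FreeMonoid (PathGen Q)) :
    pathOfWord k Q w ∈ wordSpan k Q (edgeCount Q w) :=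
  Submodule.subset_span ⟨w, le_refl (edgeCount Q w), rfl⟩

theorem wordSpan_mono : Monotone (wordSpan k Q) := fun _ _ h =>
  Submodule.span_mono (Set.image_mono fun _ hw => le_trans hw h)

theorem mul_mem_wordSpan {a b : ℕ} {x y : PathAlg k Q} (hx : x ∈ wordSpan k Q a)
    (hy : y ∈ wordSpan k Q b) : x * y ∈ wordSpan k Q (a + b) := by
  have hxy := Submodule.mul_mem_mul hx hy
  rw [wordSpan, wordSpan, Submodule.span_mul_span] at hxy
  refine Submodule.span_mono ?_ hxy
  rintro _ ⟨_, ⟨w, hw, rfl⟩, _, ⟨w', hw', rfl⟩, rfl⟩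
  exact ⟨w * w', (edgeCount_mul w w').trans_le (add_le_add hw hw'), pathOfWord_mul w w'⟩

theorem p_mem_wordSpan (v : Q.V) : PathAlg.p k Q v ∈ wordSpan k Q 0 := by
  simpa only [pathOfWord_vertex, edgeCount_vertex] using
    pathOfWord_mem_wordSpan (k := k) (FreeMonoid.of (PathGen.vertex v))

theorem arrow_mem_wordSpan (e : Q.A) : PathAlg.arrow k Q e ∈ wordSpan k Q 1 := by
  simpa only [pathOfWord_edge, edgeCount_edge] using
    pathOfWord_mem_wordSpan (k := k) (FreeMonoid.of (PathGen.edge e))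

theorem algebraMap_mem_wordSpan (c : k) : algebraMap k (PathAlg k Q) c ∈ wordSpan k Q 0 := by
  rw [Algebra.algebraMap_eq_smul_one, ← pathOfWord_one]
  exact Submodule.smul_mem _ _ (edgeCount_one (Q := Q) ▸ pathOfWord_mem_wordSpan 1)

theorem exists_mem_wordSpan (x : PathAlg k Q) : ∃ n, x ∈ wordSpan k Q n := by
  induction x using PathAlg.induction with
  | algebraMap c => exact ⟨0, algebraMap_mem_wordSpan c⟩
  | vertex v => exact ⟨0, p_mem_wordSpan v⟩
  | arrow e => exact ⟨1, arrow_mem_wordSpan e⟩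
  | mul x y hx hy =>
    obtain ⟨m, hm⟩ := hx
    obtain ⟨n, hn⟩ := hy
    exact ⟨m + n, mul_mem_wordSpan hm hn⟩
  | add x y hx hy =>
    obtain ⟨m, hm⟩ := hx
    obtain ⟨n, hn⟩ := hy
    exact ⟨max m n, Submodule.add_mem _ (wordSpan_mono (le_max_left m n) hm)
      (wordSpan_mono (le_max_right m n) hn)⟩

theorem pdeg_le_iff {x : PathAlg k Q} {n : ℕ} : pdeg k Q x ≤ n ↔ x ∈ wordSpan k Q n := by
  by_cases h : x = 0
  · simp [pdeg, h]
  · rw [pdeg, if_neg h, Nat.cast_le]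
    exact ⟨fun hn => wordSpan_mono hn (Nat.sInf_mem (exists_mem_wordSpan x)),
      fun hn => Nat.sInf_le hn⟩

theorem eq_zero_of_pdeg_eq_bot {x : PathAlg k Q} (h : pdeg k Q x = ⊥) : x = 0 := by
  by_contra hx
  simp [pdeg, hx] at h

theorem isModuleFiltration_pdeg : IsModuleFiltration (pdeg k Q) (pdeg k Q) where
  map_zero := by simp [pdeg]
  nonneg x hx := by simp [pdeg, hx]
  sub_le x y := by
    cases h : max (pdeg k Q x) (pdeg k Q y) with
    | bot =>
      rw [max_eq_bot] at h
      simp [eq_zero_of_pdeg_eq_bot h.1, eq_zero_of_pdeg_eq_bot h.2, pdeg]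
    | coe n =>
      obtain ⟨hx, hy⟩ := max_le_iff.1 h.le
      exact pdeg_le_iff.2 (Submodule.sub_mem _ (pdeg_le_iff.1 hx) (pdeg_le_iff.1 hy))
  smul_le x y := by
    cases hx : pdeg k Q x with
    | bot => simp [eq_zero_of_pdeg_eq_bot hx, pdeg]
    | coe a =>
      cases hy : pdeg k Q y with
      | bot => simp [eq_zero_of_pdeg_eq_bot hy, pdeg]
      | coe b =>
        exact pdeg_le_iff.2 (mul_mem_wordSpan (pdeg_le_iff.1 hx.le) (pdeg_le_iff.1 hy.le))

theorem pdeg_zero : pdeg k Q 0 = ⊥ :=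
  isModuleFiltration_pdeg.map_zero

theorem pdeg_mul_le (x y : PathAlg k Q) : pdeg k Q (x * y) ≤ pdeg k Q x + pdeg k Q y :=
  isModuleFiltration_pdeg.smul_le x y

theorem pdeg_p_le (v : Q.V) : pdeg k Q (PathAlg.p k Q v) ≤ 0 :=
  pdeg_le_iff.2 (p_mem_wordSpan v)

theorem pdeg_arrow_le (e : Q.A) : pdeg k Q (PathAlg.arrow k Q e) ≤ 1 :=
  pdeg_le_iff.2 (arrow_mem_wordSpan e)

theorem pdeg_algebraMap_le (c : k) : pdeg k Q (algebraMap k _ c) ≤ 0 :=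
  pdeg_le_iff.2 (algebraMap_mem_wordSpan c)

end PathLength

section Transduction

variable {k : Type} [CommRing k] {Q : FinQuiver}

theorem isPathRep_augmentation (v : Q.V) :
    IsPathRep (fun w : Q.V => if w = v then (1 : k) else 0) (fun _ : Q.A => 0) where
  vertex_mul_self w := by by_cases h : w = v <;> simp [h]
  vertex_mul_ne u w h := by by_cases hu : u = v <;> simp_all [eq_comm]
  sum_vertex := by simp
  src_mul := by simp
  mul_tgt := by simp

/-- The coefficient of the trivial path `p v`. -/
noncomputable def augmentation (v : Q.V) : PathAlg k Q →ₐ[k] k :=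
  PathAlg.lift (isPathRep_augmentation v)

@[simp]
theorem augmentation_p (v w : Q.V) :
    augmentation v (PathAlg.p k Q w) = if w = v then 1 else 0 :=
  PathAlg.lift_p _ w

@[simp]
theorem augmentation_arrow (v : Q.V) (e : Q.A) : augmentation v (PathAlg.arrow k Q e) = 0 :=
  PathAlg.lift_arrow _ e

theorem isPathRep_transductionMatrix (e : Q.A) :
    IsPathRep (Q := Q) (B := Matrix (Fin 2) (Fin 2) (PathAlg k Q))
      (fun v => !![if v = Q.src e then 1 else 0, 0; 0, PathAlg.p k Q v])
      (fun f => !![0, if f = e then PathAlg.p k Q (Q.tgt e) else 0; 0, PathAlg.arrow k Q f]) where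
  vertex_mul_self v := by
    by_cases h : v = Q.src e <;> ext i j <;> fin_cases i <;> fin_cases j <;>
      simp [h, PathAlg.p_mul_self]
  vertex_mul_ne v w h := by
    by_cases hv : v = Q.src e <;> ext i j <;> fin_cases i <;> fin_cases j <;>
      simp_all [PathAlg.p_mul_ne, eq_comm]
  sum_vertex := by
    ext i j
    fin_cases i <;> fin_cases j <;> simp [Matrix.sum_apply, PathAlg.sum_p]
  src_mul f := by
    by_cases h : f = e <;> ext i j <;> fin_cases i <;> fin_cases j <;>
      simp [h, ite_apply, PathAlg.src_mul_arrow]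
  mul_tgt f := by
    by_cases h : f = e <;> ext i j <;> fin_cases i <;> fin_cases j <;>
      simp [h, PathAlg.arrow_mul_tgt, PathAlg.p_mul_self]

/-- The upper triangular representation `r ↦ !![ε r, D r; 0, r]` of the path algebra, where `ε` is
the augmentation at the source of `e` and `D` is the transduction along `e`. -/
noncomputable def transductionMatrix (e : Q.A) :
    PathAlg k Q →ₐ[k] Matrix (Fin 2) (Fin 2) (PathAlg k Q) :=
  PathAlg.lift (isPathRep_transductionMatrix e)

/-- The left transduction along `e`: it deletes the first arrow of the paths starting with `e` and
annihilates all other paths. -/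
noncomputable def transduction (e : Q.A) : PathAlg k Q →ₗ[k] PathAlg k Q :=
  Matrix.entryLinearMap k _ 0 1 ∘ₗ (transductionMatrix e).toLinearMap

theorem transduction_apply (e : Q.A) (r : PathAlg k Q) :
    transduction e r = transductionMatrix e r 0 1 :=
  rfl

theorem transductionMatrix_p (e : Q.A) (v : Q.V) : transductionMatrix e (PathAlg.p k Q v) =
    !![if v = Q.src e then 1 else 0, 0; 0, PathAlg.p k Q v] :=
  PathAlg.lift_p _ v

theorem transductionMatrix_arrow (e f : Q.A) : transductionMatrix e (PathAlg.arrow k Q f) =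
    !![0, if f = e then PathAlg.p k Q (Q.tgt e) else 0; 0, PathAlg.arrow k Q f] :=
  PathAlg.lift_arrow _ f

theorem transductionMatrix_eq (e : Q.A) (r : PathAlg k Q) : transductionMatrix e r =
    !![algebraMap k _ (augmentation (Q.src e) r), transduction e r; 0, r] := by
  suffices h : transductionMatrix e r 0 0 = algebraMap k _ (augmentation (Q.src e) r) ∧
      transductionMatrix e r 1 0 = 0 ∧ transductionMatrix e r 1 1 = r by
    ext i j
    fin_cases i <;> fin_cases j <;> simp [h, transduction_apply]
  induction r using PathAlg.induction with
  | algebraMap c => simp [Matrix.algebraMap_matrix_apply]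
  | vertex v => by_cases h : v = Q.src e <;> simp [transductionMatrix_p, h]
  | arrow f => simp [transductionMatrix_arrow]
  | mul r s hr hs => simp [Matrix.mul_apply, hr, hs]
  | add r s hr hs => simp [hr, hs]

theorem transduction_mul (e : Q.A) (r s : PathAlg k Q) : transduction e (r * s) =
    transduction e r * s + algebraMap k _ (augmentation (Q.src e) r) * transduction e s := by
  rw [transduction_apply, map_mul, transductionMatrix_eq e r, transductionMatrix_eq e s]
  simp [Matrix.mul_apply, add_comm]

@[simp]
theorem transduction_one (e : Q.A) : transduction e (1 : PathAlg k Q) = 0 := by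
  simp [transduction_apply]

@[simp]
theorem transduction_p (e : Q.A) (v : Q.V) : transduction e (PathAlg.p k Q v) = 0 := by
  simp [transduction_apply, transductionMatrix_p]

@[simp]
theorem transduction_arrow (e f : Q.A) : transduction e (PathAlg.arrow k Q f) =
    if f = e then PathAlg.p k Q (Q.tgt e) else 0 := by
  simp [transduction_apply, transductionMatrix_arrow]

theorem eq_sum_augmentation_add_sum_transduction (x : PathAlg k Q) :
    x = ∑ v, augmentation v x • PathAlg.p k Q v +
      ∑ e, PathAlg.arrow k Q e * transduction e x := by
  induction x using PathAlg.induction with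
  | algebraMap c => simp [← Finset.smul_sum, PathAlg.sum_p, Algebra.algebraMap_eq_smul_one]
  | vertex v => simp
  | arrow f => simp [PathAlg.arrow_mul_tgt]
  | mul x y hx hy =>
    have hpy (v : Q.V) : PathAlg.p k Q v * y = augmentation v y • PathAlg.p k Q v +
        ∑ e, if v = Q.src e then PathAlg.arrow k Q e * transduction e y else 0 := by
      conv_lhs => rw [hy]
      simp [mul_add, Finset.mul_sum, ← mul_assoc, PathAlg.p_mul_p, PathAlg.p_mul_arrow]
    have hxy : ∑ v, augmentation v x • PathAlg.p k Q v * y =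
        ∑ v, augmentation v (x * y) • PathAlg.p k Q v +
          ∑ e, PathAlg.arrow k Q e *
            (algebraMap k _ (augmentation (Q.src e) x) * transduction e y) := by
      simp only [smul_mul_assoc, hpy, smul_add, Finset.sum_add_distrib, Finset.smul_sum, smul_ite,
        smul_zero, map_mul, mul_smul]
      rw [Finset.sum_comm]
      simp [← Algebra.smul_def]
    conv_lhs => rw [hx, add_mul, Finset.sum_mul, hxy, Finset.sum_mul]
    simp only [transduction_mul, mul_add, Finset.sum_add_distrib, mul_assoc]
    abel
  | add x y hx hy =>
    conv_lhs => rw [hx, hy]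
    simp only [map_add, add_smul, mul_add, Finset.sum_add_distrib]
    abel

theorem pdeg_transduction_pathOfWord_add_one_le (e : Q.A) (w : FreeMonoid (PathGen Q)) :
    pdeg k Q (transduction e (pathOfWord k Q w)) + 1 ≤ edgeCount Q w := by
  induction w using FreeMonoid.inductionOn' with
  | one => simp [pathOfWord_one, pdeg_zero]
  | of_mul g w ih =>
    rw [pathOfWord_mul, edgeCount_mul, transduction_mul]
    cases g with
    | vertex v =>
      rw [pathOfWord_vertex, edgeCount_vertex, zero_add]
      by_cases h : v = Q.src e <;> simp [h, ih, pdeg_zero]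
    | edge f =>
      rw [pathOfWord_edge, edgeCount_edge]
      by_cases h : f = e
      · have hw : pdeg k Q (PathAlg.p k Q (Q.tgt e) * pathOfWord k Q w) ≤ edgeCount Q w :=
          (isModuleFiltration_pdeg.smul_le_of_deg_nonpos (pdeg_p_le _) _).trans
            (pdeg_le_iff.2 (pathOfWord_mem_wordSpan w))
        simpa [h, add_comm] using add_le_add_left hw 1
      · simp [h, pdeg_zero]

theorem pdeg_transduction_add_one_le (e : Q.A) (x : PathAlg k Q) :
    pdeg k Q (transduction e x) + 1 ≤ pdeg k Q x := by
  have hspan {n : ℕ} (hx : x ∈ wordSpan k Q n) : pdeg k Q (transduction e x) + 1 ≤ n := by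
    refine Submodule.span_induction (p := fun x _ => pdeg k Q (transduction e x) + 1 ≤ n)
      ?_ (by simp [pdeg_zero]) (fun x y _ _ hx hy => ?_) (fun c x _ hx => ?_) hx
    · rintro _ ⟨w, hw, rfl⟩
      exact (pdeg_transduction_pathOfWord_add_one_le e w).trans (by exact_mod_cast hw)
    · rw [map_add]
      refine (add_le_add_left (isModuleFiltration_pdeg.add_le _ _) 1).trans ?_
      rw [← max_add_add_right]
      exact max_le hx hy
    · rw [map_smul, Algebra.smul_def]
      exact (add_le_add_left (isModuleFiltration_pdeg.smul_le_of_deg_nonpos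
        (pdeg_algebraMap_le c) _) 1).trans hx
  cases hx : pdeg k Q x with
  | bot => simp [eq_zero_of_pdeg_eq_bot hx, pdeg_zero]
  | coe n => exact hspan (pdeg_le_iff.1 hx.le)

theorem pdeg_smul_p_le (c : k) (v : Q.V) : pdeg k Q (c • PathAlg.p k Q v) ≤ 0 := by
  rw [Algebra.smul_def]
  exact (isModuleFiltration_pdeg.smul_le_of_deg_nonpos (pdeg_algebraMap_le c) _).trans
    (pdeg_p_le v)

theorem exists_pdeg_transduction_add_one_eq {x : PathAlg k Q} (hx : 0 < pdeg k Q x) :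
    ∃ e : Q.A, pdeg k Q (transduction e x) + 1 = pdeg k Q x := by
  by_contra! hne
  have hlt (e : Q.A) : pdeg k Q (PathAlg.arrow k Q e * transduction e x) < pdeg k Q x :=
    calc pdeg k Q (PathAlg.arrow k Q e * transduction e x)
        ≤ 1 + pdeg k Q (transduction e x) :=
          (pdeg_mul_le _ _).trans (add_le_add_left (pdeg_arrow_le e) _)
      _ = pdeg k Q (transduction e x) + 1 := add_comm _ _
      _ < pdeg k Q x := (pdeg_transduction_add_one_le e x).lt_of_ne (hne e)
  have hbot : ⊥ < pdeg k Q x := bot_le.trans_lt hx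
  refine lt_irrefl (pdeg k Q x) ?_
  conv_lhs => rw [eq_sum_augmentation_add_sum_transduction x]
  exact (isModuleFiltration_pdeg.add_le _ _).trans_lt (max_lt
    (isModuleFiltration_pdeg.sum_lt hbot fun v _ => (pdeg_smul_p_le _ v).trans_lt hx)
    (isModuleFiltration_pdeg.sum_lt hbot fun e _ => hlt e))

theorem transduction_eq_zero_of_pdeg_nonpos (e : Q.A) {x : PathAlg k Q} (hx : pdeg k Q x ≤ 0) :
    transduction e x = 0 := by
  by_contra hne
  have h : (0 : WithBot ℕ) + 1 ≤ 0 :=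
    (add_le_add_left (isModuleFiltration_pdeg.nonneg _ hne) 1).trans
      ((pdeg_transduction_add_one_le e x).trans hx)
  exact absurd h (by decide)

theorem eq_augmentation_smul_p {x : PathAlg k Q} (hx : pdeg k Q x ≤ 0) {v : Q.V}
    (hxv : x * PathAlg.p k Q v = x) : x = augmentation v x • PathAlg.p k Q v := by
  conv_lhs => rw [← hxv, eq_sum_augmentation_add_sum_transduction x]
  simp [transduction_eq_zero_of_pdeg_nonpos _ hx, Finset.sum_mul, PathAlg.p_mul_p]

end Transduction

section FilteredTransduction

variable {k : Type} [CommRing k] {Q : FinQuiver} {M : Type} [AddCommGroup M]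
  [Module (PathAlg k Q) M] {μ : M → WithBot ℕ} {e : Q.A} {δ : M →+ M}

variable (k) in
/-- An additive map on a filtered module over the path algebra which obeys the same Leibniz rule as
the transduction along `e`, and lowers degrees. -/
structure IsTransduction (e : Q.A) (μ : M → WithBot ℕ) (δ : M →+ M) : Prop where
  map_smul : ∀ (r : PathAlg k Q) (m : M),
    δ (r • m) = transduction e r • m + algebraMap k (PathAlg k Q) (augmentation (Q.src e) r) • δ m
  deg_add_one_le : ∀ m, μ (δ m) + 1 ≤ μ m

theorem isTransduction_transduction (e : Q.A) :
    IsTransduction k e (pdeg k Q) (transduction e).toAddMonoidHom where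
  map_smul := transduction_mul e
  deg_add_one_le := pdeg_transduction_add_one_le e

theorem IsTransduction.mapRange (h : IsTransduction k e μ δ) (hμ : IsModuleFiltration (pdeg k Q) μ)
    (I : Type) : IsTransduction k e (maxDegree μ (I := I)) (Finsupp.mapRange.addMonoidHom δ) where
  map_smul r f := by
    ext i
    simp [h.map_smul]
  deg_add_one_le f := by
    have hsup (g : I →₀ M) : maxDegree μ g + 1 = g.support.sup fun i => μ (g i) + 1 :=
      Finset.apply_sup_eq_sup_comp_of_linearOrder (· + 1) (fun _ _ h => add_le_add_left h 1)
        (WithBot.bot_add 1)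
    rw [hsup]
    exact Finset.sup_le fun i _ => by
      simpa using (h.deg_add_one_le (f i)).trans (hμ.le_maxDegree f i)

theorem transduction_mul_eq (e : Q.A) {r p : PathAlg k Q} (hp : p ∈ vertexFinset k Q)
    (h : r * p = r) : transduction e r * p = transduction e r := by
  obtain ⟨v, rfl⟩ := mem_vertexFinset.1 hp
  conv_rhs => rw [← h, transduction_mul, transduction_p, mul_zero, add_zero]

variable {ι : Type} [Fintype ι] [LinearOrder ι] {p : ι → PathAlg k Q} {m : ι → M} {i : ι}
  {r : ι → PathAlg k Q}

theorem IsLeadingRelation.deg_lt_of_ne_zero (h : IsLeadingRelation (pdeg k Q) μ p m i r)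
    (hmono : Monotone (μ ∘ m)) (hr : μ (m i) < pdeg k Q (r i) + μ (m i)) {j : ι} (hj : r j ≠ 0) :
    μ (m j) < pdeg k Q (r i) + μ (m i) := by
  obtain hij | hji := lt_or_ge i j
  · exact (le_add_of_nonneg_left (isModuleFiltration_pdeg.nonneg _ hj)).trans_lt (h.deg_lt j hij)
  · exact (hmono hji).trans_lt hr

theorem IsLeadingRelation.map_transduction (h : IsLeadingRelation (pdeg k Q) μ p m i r)
    (hμ : IsModuleFiltration (pdeg k Q) μ) (hp : ∀ j, p j ∈ vertexFinset k Q)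
    (hmono : Monotone (μ ∘ m)) (hδ : IsTransduction k e μ δ)
    (he : pdeg k Q (transduction e (r i)) + 1 = pdeg k Q (r i)) :
    IsLeadingRelation (pdeg k Q) μ p m i fun j => transduction e (r j) := by
  set N := pdeg k Q (transduction e (r i)) + μ (m i)
  have hN : N + 1 = pdeg k Q (r i) + μ (m i) := by rw [← he, add_right_comm]
  have hNbot : N ≠ ⊥ := fun hN' => by simpa [← hN, hN'] using h.sum_lt
  have hDr : transduction e (r i) ≠ 0 := fun h0 => hNbot (by simp [N, h0, pdeg_zero])
  have hmi : μ (m i) < pdeg k Q (r i) + μ (m i) :=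
    (le_add_of_nonneg_left (isModuleFiltration_pdeg.nonneg _ hDr)).trans_lt
      (lt_of_add_one_le_of_ne_bot (bot_le.trans_lt h.sum_lt).ne' hN.le)
  have hD (j) : pdeg k Q (transduction e (r j)) + μ (m j) + 1 ≤ pdeg k Q (r j) + μ (m j) := by
    rw [add_right_comm]
    exact add_le_add_left (pdeg_transduction_add_one_le e (r j)) _
  have hsum : ∑ j, transduction e (r j) • m j = δ (∑ j, r j • m j) -
      ∑ j, algebraMap k (PathAlg k Q) (augmentation (Q.src e) (r j)) • δ (m j) := by
    simp only [map_sum, hδ.map_smul, Finset.sum_add_distrib, add_sub_cancel_right]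
  have hlt {x : M} (hx : μ x < pdeg k Q (r i) + μ (m i)) : μ (δ x) < N :=
    lt_of_add_lt_add_right (a := 1) ((hδ.deg_add_one_le x).trans_lt (hx.trans_eq hN.symm))
  refine ⟨fun j => transduction_mul_eq e (hp j) (h.mul_eq j), fun j => ?_, fun j hij => ?_, ?_⟩
  · exact WithBot.le_of_add_le_add_right WithBot.one_ne_bot
      ((hD j).trans ((h.deg_le j).trans_eq hN.symm))
  · exact lt_of_add_lt_add_right (a := 1) ((hD j).trans_lt ((h.deg_lt j hij).trans_eq hN.symm))
  · rw [hsum]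
    refine (hμ.sub_le _ _).trans_lt (max_lt (hlt h.sum_lt) ?_)
    refine hμ.sum_lt (bot_lt_iff_ne_bot.2 hNbot) fun j _ => ?_
    by_cases hj : r j = 0
    · simpa only [hj, map_zero, zero_smul, hμ.map_zero] using bot_lt_iff_ne_bot.2 hNbot
    · exact (hμ.smul_le_of_deg_nonpos (pdeg_algebraMap_le _) _).trans_lt
        (hlt (h.deg_lt_of_ne_zero hmono hmi hj))

end FilteredTransduction

section WeakAlgorithm

variable {k : Type} [Field k] {Q : FinQuiver}

theorem exists_mul_eq_vertex {x q : PathAlg k Q} (hq : q ∈ vertexFinset k Q) (hxq : x * q = x)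
    (hx0 : x ≠ 0) (hx : pdeg k Q x ≤ 0) : ∃ d, pdeg k Q d ≤ 0 ∧ d * x = q := by
  obtain ⟨v, rfl⟩ := mem_vertexFinset.1 hq
  obtain ⟨c, rfl⟩ : ∃ c : k, x = c • PathAlg.p k Q v := ⟨_, eq_augmentation_smul_p hx hxq⟩
  have hc : c ≠ 0 := left_ne_zero_of_smul hx0
  refine ⟨algebraMap k _ c⁻¹, pdeg_algebraMap_le _, ?_⟩
  rw [← Algebra.smul_def, smul_smul, inv_mul_cancel₀ hc, one_smul]

variable {M : Type} [AddCommGroup M] [Module (PathAlg k Q) M] {μ : M → WithBot ℕ}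

theorem IsLeadingRelation.depOn_of_isTransduction {ι : Type} [Fintype ι] [LinearOrder ι]
    {p r : ι → PathAlg k Q} {m : ι → M} {i : ι} (h : IsLeadingRelation (pdeg k Q) μ p m i r)
    (hμ : IsModuleFiltration (pdeg k Q) μ) (hp : ∀ j, p j ∈ vertexFinset k Q)
    (hpm : p i • m i = m i) (hmono : Monotone (μ ∘ m))
    (hδ : ∀ e : Q.A, ∃ δ : M →+ M, IsTransduction k e μ δ) :
    DepOn (pdeg k Q) μ (fun j : {j // j < i} => p j) (fun j : {j // j < i} => m j) (m i) := by
  induction hd : pdeg k Q (r i) using WellFoundedLT.induction generalizing r with | ind d ih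
  have hri : r i ≠ 0 := fun h0 => by simpa [h0, pdeg_zero] using h.sum_lt
  obtain hr | hr := le_or_gt (pdeg k Q (r i)) 0
  · obtain ⟨d, hd, hdr⟩ := exists_mul_eq_vertex (hp i) (h.mul_eq i) hri hr
    exact h.depOn isModuleFiltration_pdeg hμ hpm hr hd hdr
  · obtain ⟨e, he⟩ := exists_pdeg_transduction_add_one_eq hr
    obtain ⟨δ, hδe⟩ := hδ e
    exact ih _ (hd ▸ lt_of_add_one_le_of_ne_bot (bot_le.trans_lt hr).ne' he.le)
      (h.map_transduction hμ hp hmono hδe he) rfl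

theorem weakAlgorithm_of_isTransduction (hμ : IsModuleFiltration (pdeg k Q) μ)
    (hδ : ∀ e : Q.A, ∃ δ : M →+ M, IsTransduction k e μ δ) :
    WeakAlgorithm (pdeg k Q) (vertexFinset k Q) μ := by
  rintro ℓ p m hp hpm hmono (⟨i, hi⟩ | ⟨r, hrp, hlt⟩)
  · exact ⟨i, Or.inl hi⟩
  · obtain ⟨i, hi⟩ := exists_isLeadingRelation hrp hlt
    exact ⟨i, hi.depOn_of_isTransduction hμ hp (hpm i) hmono hδ⟩

theorem weakAlgorithm_maxDegree_pdeg (k : Type) [Field k] (Q : FinQuiver) (I : Type) :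
    WeakAlgorithm (pdeg k Q) (vertexFinset k Q) (maxDegree (pdeg k Q) (I := I)) :=
  weakAlgorithm_of_isTransduction (isModuleFiltration_pdeg.maxDegree I) fun e =>
    ⟨_, (isTransduction_transduction e).mapRange isModuleFiltration_pdeg I⟩

end WeakAlgorithm

end LPA

open LPA in
/-- A left `P_k(E)`-module `M` is projective if and only if `M` satisfies the
weak algorithm relative to a suitable filtration `μ` (over the path-length degree `pdeg`) and
the set of vertices `P = {p_1, …, p_d}` of `P_k(E)`. -/
theorem statement_6 (k : Type) [Field k] (Q : FinQuiver) (M : Type) [AddCommGroup M]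
    [Module (PathAlg k Q) M] :
    Module.Projective (PathAlg k Q) M ↔
      ∃ μ : M → WithBot ℕ, IsModuleFiltration (pdeg k Q) μ ∧
        WeakAlgorithm (pdeg k Q) (vertexFinset k Q) μ := by
  constructor
  · rintro ⟨s, hs⟩
    exact ⟨maxDegree (pdeg k Q) ∘ s, (isModuleFiltration_pdeg.maxDegree M).comap hs.injective,
      (weakAlgorithm_maxDegree_pdeg k Q M).comap hs.injective⟩
  · rintro ⟨μ, hμ, h⟩
    have hdeg : ∀ p ∈ vertexFinset k Q, pdeg k Q p ≤ 0 := fun p hp => by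
      obtain ⟨v, rfl⟩ := mem_vertexFinset.1 hp
      exact pdeg_p_le v
    have hidem : ∀ p ∈ vertexFinset k Q, IsIdempotentElem p := fun p hp => by
      obtain ⟨v, rfl⟩ := mem_vertexFinset.1 hp
      exact PathAlg.isIdempotentElem_p v
    exact projective_of_weakAlgorithm isModuleFiltration_pdeg hμ hdeg hidem sum_vertexFinset h
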